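/- For every integer n ≥ 11, every 7×n sign matrix has at most 1 + (n−1) + C(n−1, 2) 2-neighborly plain travels, where C denotes the binomial coefficient. (Equivalently, every rank 7 Lawrence oriented matroid on n ≥ 11 elements has at most c_7(n,2) = 2·∑_{i=0}^{2} C(n−1,i) 2-neighborly reorientations.) -/

import Mathlib

/-- An `r × n` sign matrix: entries in `{+1, -1}` (1-indexed: `1 ≤ i ≤ r`, `1 ≤ j ≤ n`). -/
def IsSignMatrix (r n : ℕ) (A : ℕ → ℕ → ℤ) : Prop :=
  ∀ i j, 1 ≤ i → i ≤ r → 1 ≤ j → j ≤ n → A i j = 1 ∨ A i j = -1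

/-- `A_S`: the matrix obtained from `A` by negating every entry of each column in `S`. -/
def reorient (A : ℕ → ℕ → ℤ) (S : Finset ℕ) : ℕ → ℕ → ℤ :=
  fun i j => if j ∈ S then -A i j else A i j

/-- The first column `c'` with `c < c' ≤ n` where row `i` changes sign relative to
entry `a_{i,c}`, if such a column exists. -/
def rowChange (A : ℕ → ℕ → ℤ) (n i c : ℕ) : Option ℕ :=
  (List.range (n + 1)).find? fun c' => decide (c < c' ∧ A i c' ≠ A i c)

/-- `ttEntry A n i` is the column at which the top travel of `A` enters row `i`
(rows and columns 1-indexed): the travel enters row 1 at column 1, and, having entered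
row `i` at column `c`, it enters row `i+1` at the first sign change of row `i` after
column `c` (if any).  The value `some` at the "virtual" row `r+1` means the top travel
had a sign change in the bottom row `r`, i.e. the top travel is positive. -/
def ttEntry (A : ℕ → ℕ → ℤ) (n : ℕ) : ℕ → Option ℕ
  | 0 => none
  | 1 => some 1
  | i + 2 => (ttEntry A n (i + 1)).bind (rowChange A n (i + 1))

/-- The top travel of the `r × n` sign matrix `A` is positive: it contains two
horizontally consecutive entries of row `r` with opposite signs. -/
def ttPositive (A : ℕ → ℕ → ℤ) (r n : ℕ) : Prop :=
  (ttEntry A n (r + 1)).isSome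

/-- `A` is `k`-neighborly: for every set `S` of at most `k` columns, the top travel
of `A_S` is not positive. -/
def IsNeighborly (A : ℕ → ℕ → ℤ) (r n k : ℕ) : Prop :=
  ∀ S : Finset ℕ, S ⊆ Finset.Icc 1 n → S.card ≤ k → ¬ ttPositive (reorient A S) r n

/-- A plain travel of an `r × n` sign matrix, identified with the set `D` of columns of
its downward (vertical) moves: the columns `2 ≤ j₁ < ⋯ < j_{s-1} ≤ n` with `s ≤ r`. -/
def IsPlainTravel (r n : ℕ) (D : Finset ℕ) : Prop :=
  D ⊆ Finset.Icc 2 n ∧ D.card ≤ r - 1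

/-- The top travel of `A` follows exactly the plain travel with downward-move columns `D`:
it makes its downward moves precisely at the columns of `D` (entering rows `2, …, |D|+1`
there) and then ends at column `n` in row `|D|+1` without a further sign change. -/
def ttFollows (A : ℕ → ℕ → ℤ) (n : ℕ) (D : Finset ℕ) : Prop :=
  ttEntry A n (D.card + 2) = none ∧
  ∀ c, c ∈ D ↔ ∃ i, 2 ≤ i ∧ i ≤ D.card + 1 ∧ ttEntry A n i = some c

/-- The plain travel `D` of `A` is `k`-neighborly: there is a set `R` of columns such that
the top travel of `A_R` follows exactly the path `D` and `A_R` is a `k`-neighborly matrix. -/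
def IsNeighborlyTravel (A : ℕ → ℕ → ℤ) (r n k : ℕ) (D : Finset ℕ) : Prop :=
  ∃ R : Finset ℕ, R ⊆ Finset.Icc 1 n ∧ ttFollows (reorient A R) n D ∧
    IsNeighborly (reorient A R) r n k

/-!
Reorientations are normalised so that column `1` is never flipped; a plain travel is determined by
any reorientation realising it, so it suffices to count the sets `R ⊆ {2, …, n}` for which `A_R` is
`k`-neighborly. Let `N(r, n)` be their number.

Deleting the last column gives the Pascal-type inequality
`N(r, n + 1) ≤ N(r, n) + N(r - 1, n)`: if both extensions of `R` to the new column are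
`k`-neighborly in rank `r`, then for every flip set one of them forces an extra step down, so `R`
is already `k`-neighborly in rank `r - 1`. Hence `N(2k + d, n) ≤ ∑_{i < d} C(n - 1, i)` for all
`n ≥ 2(k + d) + 1` as soon as it holds for `n = 2(k + d) + 1`.

For `k = 2` and `d ≤ 3` these base cases are a finite computation. Scanning the columns from left
to right, only the furthest rows reachable with at most two flips matter, and an adversary who may
choose the sign changes of the next column afresh for each such profile still cannot exceed
`0`, `1`, `9` and `56`.
-/

open Finset

section TopTravel

variable {B B' : ℕ → ℕ → ℤ} {r n k i c c' : ℕ} {D : Finset ℕ}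

theorem rowChange_eq_some_iff : rowChange B n i c = some c' ↔
    c < c' ∧ c' ≤ n ∧ B i c' ≠ B i c ∧ ∀ x, c < x → x < c' → B i x = B i c := by
  simp only [rowChange, List.find?_range_eq_some, decide_eq_true_eq, List.mem_range,
    Bool.not_eq_true', decide_eq_false_iff_not, not_and, not_not, Nat.lt_succ_iff]
  grind

theorem rowChange_eq_none_iff :
    rowChange B n i c = none ↔ ∀ x, c < x → x ≤ n → B i x = B i c := by
  simp only [rowChange, List.find?_eq_none, List.mem_range, decide_eq_true_eq, not_and, not_not,
    Nat.lt_succ_iff]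
  grind

theorem one_le_of_ttEntry_eq_some (h : ttEntry B n i = some c) : 1 ≤ c := by
  induction i using ttEntry.induct generalizing c with
  | case1 => simp [ttEntry] at h
  | case2 => simp_all [ttEntry]
  | case3 i ih =>
    obtain ⟨b, hb, hbc⟩ := Option.bind_eq_some_iff.1 h
    exact (ih hb).trans (rowChange_eq_some_iff.1 hbc).1.le

theorem le_of_ttEntry_eq_some (hi : 2 ≤ i) (h : ttEntry B n i = some c) : c ≤ n := by
  obtain ⟨i, rfl⟩ := Nat.exists_eq_add_of_le' hi
  obtain ⟨b, -, hbc⟩ := Option.bind_eq_some_iff.1 h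
  exact (rowChange_eq_some_iff.1 hbc).2.1

theorem ttEntry_eq_none_of_le {j : ℕ} (hi : 1 ≤ i) (hij : i ≤ j) (h : ttEntry B n i = none) :
    ttEntry B n j = none := by
  induction j, hij using Nat.le_induction with
  | base => exact h
  | succ j hj ih =>
    obtain ⟨j, rfl⟩ := Nat.exists_eq_add_of_le' (hi.trans hj)
    simp [ttEntry, ih]

open scoped Classical in
/-- The set of columns of the downward moves of the top travel of `B`; a move out of the bottom
row counts as well. -/
noncomputable def downMoves (B : ℕ → ℕ → ℤ) (n : ℕ) : Finset ℕ :=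
  {c ∈ range (n + 1) | ∃ i, 2 ≤ i ∧ ttEntry B n i = some c}

theorem ttFollows.eq_downMoves (h : ttFollows B n D) : D = downMoves B n := by
  classical
  ext c
  rw [h.2 c, downMoves, mem_filter, mem_range]
  constructor
  · rintro ⟨i, hi, -, hc⟩
    exact ⟨Nat.lt_succ_of_le (le_of_ttEntry_eq_some hi hc), i, hi, hc⟩
  · rintro ⟨-, i, hi, hc⟩
    refine ⟨i, hi, ?_, hc⟩
    by_contra! hlt
    simp [ttEntry_eq_none_of_le (by lia) hlt h.1] at hc

theorem ttEntry_eq_of_eq_neg (h : ∀ i, ∀ j ∈ Icc 1 n, B' i j = -B i j) (i : ℕ) :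
    ttEntry B' n i = ttEntry B n i := by
  induction i using ttEntry.induct with
  | case1 => rfl
  | case2 => rfl
  | case3 i ih =>
    rw [ttEntry, ttEntry, ih]
    refine Option.bind_congr fun c hc ↦ List.find?_congr fun x hx ↦ decide_eq_decide.2 ?_
    refine and_congr_right fun hcx ↦ ?_
    have hc1 := one_le_of_ttEntry_eq_some hc
    have hxn : x ≤ n := Nat.lt_succ_iff.1 (List.mem_range.1 hx)
    rw [h _ x (mem_Icc.2 (by lia)), h _ c (mem_Icc.2 (by lia)), Ne, neg_inj]

theorem ttFollows.of_eq_neg (h : ∀ i, ∀ j ∈ Icc 1 n, B' i j = -B i j) (hB : ttFollows B n D) :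
    ttFollows B' n D := by
  simpa only [ttFollows, ttEntry_eq_of_eq_neg h] using hB

theorem IsNeighborly.of_eq_neg (h : ∀ i, ∀ j ∈ Icc 1 n, B' i j = -B i j)
    (hB : IsNeighborly B r n k) : IsNeighborly B' r n k := by
  intro S hS hk
  have hneg : ∀ i, ∀ j ∈ Icc 1 n, reorient B' S i j = -reorient B S i j := by
    intro i j hj
    simp only [reorient, h i j hj]
    split_ifs <;> rfl
  simpa only [ttPositive, ttEntry_eq_of_eq_neg hneg] using hB S hS hk

theorem IsSignMatrix.reorient (hB : IsSignMatrix r n B) (R : Finset ℕ) :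
    IsSignMatrix r n (reorient B R) := by
  intro i j hi hir hj hjn
  have := hB i j hi hir hj hjn
  grind [_root_.reorient]

theorem IsNeighborlyTravel.exists_subset_Icc_two (h : IsNeighborlyTravel B r n k D) :
    ∃ R ⊆ Icc 2 n, ttFollows (reorient B R) n D ∧ IsNeighborly (reorient B R) r n k := by
  obtain ⟨R, hR, hD, hN⟩ := h
  by_cases h1 : 1 ∈ R
  · have hneg : ∀ i, ∀ j ∈ Icc 1 n, reorient B (Icc 1 n \ R) i j = -reorient B R i j := by
      intro i j hj
      simp only [reorient, mem_sdiff, hj, true_and]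
      split_ifs <;> simp_all
    refine ⟨Icc 1 n \ R, fun j hj ↦ ?_, hD.of_eq_neg hneg, hN.of_eq_neg hneg⟩
    grind
  · refine ⟨R, fun j hj ↦ ?_, hD, hN⟩
    grind

end TopTravel

section Walk

variable {e e' : ℕ → ℕ → Bool} {r m k : ℕ}

/-- The row of a walk one column after row `i`, when `f i` tells whether row `i` changes sign
between these two columns. -/
def nextRow (f : ℕ → Bool) (i : ℕ) : ℕ := i + (f i).toNat

/-- The row of the travel in column `k + 1`, when `e j i` tells whether row `i` changes sign
between columns `j + 1` and `j + 2`. There is no bottom row: the walk goes on downwards. -/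
def walkRow (e : ℕ → ℕ → Bool) : ℕ → ℕ
  | 0 => 1
  | k + 1 => nextRow (e k) (walkRow e k)

/-- The effect on a sign change pattern of negating the columns in `S`: the sign changes between
columns `j + 1` and `j + 2` are toggled when exactly one of these columns is in `S`. -/
def flipColumns (e : ℕ → ℕ → Bool) (S : Finset ℕ) : ℕ → ℕ → Bool :=
  fun j i ↦ e j i ^^ (decide (j + 1 ∈ S) ^^ decide (j + 2 ∈ S))

/-- The pattern of horizontal sign changes of a matrix, in the indexing of `walkRow`. -/
def signChange (B : ℕ → ℕ → ℤ) : ℕ → ℕ → Bool :=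
  fun j i ↦ decide (B i (j + 1) ≠ B i (j + 2))

theorem le_nextRow (f : ℕ → Bool) (i : ℕ) : i ≤ nextRow f i := Nat.le_add_right _ _

theorem nextRow_monotone (f : ℕ → Bool) : Monotone (nextRow f) := by
  intro s w hsw
  rcases hsw.eq_or_lt with rfl | hlt
  · rfl
  · have := Bool.toNat_le (f s)
    simp only [nextRow]
    lia

theorem one_le_walkRow (e : ℕ → ℕ → Bool) (k : ℕ) : 1 ≤ walkRow e k := by
  induction k with
  | zero => rfl
  | succ k ih => exact ih.trans (le_nextRow _ _)

theorem walkRow_monotone (e : ℕ → ℕ → Bool) : Monotone (walkRow e) :=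
  monotone_nat_of_le_succ fun _ ↦ le_nextRow _ _

theorem walkRow_congr (h : ∀ j < m, e j = e' j) : walkRow e m = walkRow e' m := by
  induction m with
  | zero => rfl
  | succ m ih =>
    rw [walkRow, walkRow, ih fun j hj ↦ h j (by lia), h m (by lia)]

theorem walkRow_eq_of_le (h : ∀ j < m, ∀ i, 1 ≤ i → i ≤ r → e j i = e' j i)
    (hr : walkRow e m ≤ r) : walkRow e' m = walkRow e m := by
  induction m with
  | zero => rfl
  | succ m ih =>
    have hm : walkRow e m ≤ r := (walkRow_monotone e m.le_succ).trans hr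
    rw [walkRow, walkRow, ih (fun j hj ↦ h j (by lia)) hm, nextRow, nextRow,
      h m (by lia) _ (one_le_walkRow e m) hm]

theorem walkRow_eq_of_forall_eq_false (hkm : k ≤ m)
    (h : ∀ j, k ≤ j → j < m → e j (walkRow e k) = false) : walkRow e m = walkRow e k := by
  induction m, hkm using Nat.le_induction with
  | base => rfl
  | succ m hm ih =>
    rw [walkRow, ih fun j hj hjm ↦ h j hj (by lia), nextRow, h m hm (by lia), Bool.toNat_false,
      add_zero]

theorem flipColumns_insert_of_lt {j : ℕ} (hj : j < m) (e : ℕ → ℕ → Bool) (S : Finset ℕ) :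
    flipColumns e (insert (m + 2) S) j = flipColumns e S j := by
  have h1 : j + 1 ≠ m + 2 := by lia
  have h2 : j + 2 ≠ m + 2 := by lia
  funext i
  simp only [flipColumns, mem_insert, h1, h2, false_or]

theorem flipColumns_insert_last {S : Finset ℕ} (hS : m + 2 ∉ S) (e : ℕ → ℕ → Bool) (i : ℕ) :
    flipColumns e (insert (m + 2) S) m i = !flipColumns e S m i := by
  simp [flipColumns, hS]

variable {B : ℕ → ℕ → ℤ} {n c : ℕ}

theorem exists_walkRow_of_ttEntry_eq_some {i : ℕ} (h : ttEntry B n (i + 1) = some c) :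
    ∃ a, c = a + 1 ∧ walkRow (signChange B) a = i + 1 := by
  induction i generalizing c with
  | zero => exact ⟨0, by simpa [ttEntry, eq_comm] using h, rfl⟩
  | succ i ih =>
    obtain ⟨b, hb, hbc⟩ := Option.bind_eq_some_iff.1 h
    obtain ⟨a, rfl, ha⟩ := ih hb
    obtain ⟨hlt, -, hne, heq⟩ := rowChange_eq_some_iff.1 hbc
    obtain ⟨d, rfl⟩ := Nat.exists_eq_add_of_le' (show 2 ≤ c by lia)
    have hconst : ∀ x, a < x → x < d + 2 → B (i + 1) x = B (i + 1) (a + 1) := by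
      intro x hax hxd
      rcases Nat.eq_or_lt_of_le hax with rfl | hax
      · rfl
      · exact heq x hax hxd
    have hd : walkRow (signChange B) d = i + 1 := by
      rw [walkRow_eq_of_forall_eq_false (by lia : a ≤ d), ha]
      intro j haj hjd
      simp [ha, signChange, hconst (j + 1) (by lia) (by lia), hconst (j + 2) (by lia) (by lia)]
    refine ⟨d + 1, rfl, ?_⟩
    have hchange : signChange B d (i + 1) = true := by
      simpa [signChange, hconst (d + 1) (by lia) (by lia)] using hne.symm
    rw [walkRow, hd, nextRow, hchange, Bool.toNat_true]

theorem walkRow_le_of_not_ttPositive (h : ¬ttPositive B r (m + 1)) :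
    walkRow (signChange B) m ≤ r := by
  replace h : ttEntry B (m + 1) (r + 1) = none := by simpa [ttPositive] using h
  induction r with
  | zero => simp [ttEntry] at h
  | succ r ih =>
    rcases hc : ttEntry B (m + 1) (r + 1) with _ | c
    · exact (ih hc).trans r.le_succ
    obtain ⟨a, rfl, ha⟩ := exists_walkRow_of_ttEntry_eq_some hc
    have hnone : rowChange B (m + 1) (r + 1) (a + 1) = none := by simpa [ttEntry, hc] using h
    rcases le_total m a with hma | ham
    · exact (walkRow_monotone _ hma).trans ha.le
    have hconst : ∀ x, a < x → x ≤ m + 1 → B (r + 1) x = B (r + 1) (a + 1) := by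
      intro x hax hxm
      rcases Nat.eq_or_lt_of_le hax with rfl | hax
      · rfl
      · exact rowChange_eq_none_iff.1 hnone x hax hxm
    refine (walkRow_eq_of_forall_eq_false ham fun j haj hjm ↦ ?_).trans ha |>.le
    simp [ha, signChange, hconst (j + 1) (by lia) (by lia), hconst (j + 2) (by lia) (by lia)]

theorem signChange_reorient (hB : IsSignMatrix r n B) (S : Finset ℕ) {j i : ℕ} (hj : j + 2 ≤ n)
    (hi : 1 ≤ i) (hir : i ≤ r) :
    signChange (reorient B S) j i = flipColumns (signChange B) S j i := by
  have h1 := hB i (j + 1) hi hir (by lia) (by lia)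
  have h2 := hB i (j + 2) hi hir (by lia) hj
  simp only [signChange, reorient, flipColumns]
  rcases h1 with h1 | h1 <;> rcases h2 with h2 | h2 <;>
    by_cases hS1 : j + 1 ∈ S <;> by_cases hS2 : j + 2 ∈ S <;> simp [h1, h2, hS1, hS2]

end Walk

section Confined

variable {e e' : ℕ → ℕ → Bool} {r r' m k : ℕ}

/-- After at most `k` column flips the walk over `m + 1` columns still ends in one of the first
`r` rows. For the sign changes of a matrix this is `k`-neighborliness. -/
def Confined (e : ℕ → ℕ → Bool) (r m k : ℕ) : Prop :=
  ∀ S ⊆ Icc 1 (m + 1), #S ≤ k → walkRow (flipColumns e S) m ≤ r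

theorem Confined.mono (hr : r ≤ r') (h : Confined e r m k) : Confined e r' m k :=
  fun S hS hk ↦ (h S hS hk).trans hr

theorem Confined.anti {k' : ℕ} (hk : k' ≤ k) (h : Confined e r m k) : Confined e r m k' :=
  fun S hS hS' ↦ h S hS (hS'.trans hk)

theorem walkRow_flipColumns_congr (h : ∀ j < m, e j = e' j) (S : Finset ℕ) :
    walkRow (flipColumns e S) m = walkRow (flipColumns e' S) m :=
  walkRow_congr fun j hj ↦ funext fun i ↦ by rw [flipColumns, flipColumns, h j hj]

theorem Confined.of_succ (h : ∀ j < m, e' j = e j) (he : Confined e' r (m + 1) k) :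
    Confined e r m k := fun S hS hk ↦ by
  rw [← walkRow_flipColumns_congr h]
  exact (walkRow_monotone _ m.le_succ).trans (he S (hS.trans (Icc_subset_Icc_right (by lia))) hk)

theorem Confined.pred_of_not (h : ∀ j < m, e' j = e j) (hm : ∀ i, e' m i = !e m i)
    (he : Confined e r (m + 1) k) (he' : Confined e' r (m + 1) k) :
    Confined e (r - 1) m k := by
  intro S hS hk
  have hS' : S ⊆ Icc 1 (m + 2) := hS.trans (Icc_subset_Icc_right (by lia))
  have hw := he S hS' hk
  have hw' := he' S hS' hk
  rw [walkRow, nextRow] at hw hw'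
  rw [walkRow_flipColumns_congr h] at hw'
  have hnot : ∀ i, flipColumns e' S m i = !flipColumns e S m i := by simp [flipColumns, hm]
  rw [hnot] at hw'
  cases hb : flipColumns e S m (walkRow (flipColumns e S) m) <;>
    simp only [hb, Bool.not_true, Bool.not_false, Bool.toNat_true, Bool.toNat_false] at hw hw' <;>
    lia

theorem IsNeighborly.confined {A : ℕ → ℕ → ℤ} (hA : IsSignMatrix r (m + 1) A) {R : Finset ℕ}
    (h : IsNeighborly (reorient A R) r (m + 1) k) :
    Confined (flipColumns (signChange A) R) r m k := by
  intro S hS hk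
  have hle := walkRow_le_of_not_ttPositive (h S hS hk)
  refine (walkRow_eq_of_le (fun j hj i hi hir ↦ ?_) hle).trans_le hle
  rw [signChange_reorient (hA.reorient R) S (by lia) hi hir, flipColumns, flipColumns,
    signChange_reorient hA R (by lia) hi hir]

open scoped Classical in
/-- The reorientations of a sign change pattern on `m + 1` columns, normalised to leave column `1`
alone, that are `k`-neighborly in rank `r`. -/
noncomputable def confinedFlips (e : ℕ → ℕ → Bool) (r m k : ℕ) : Finset (Finset ℕ) :=
  {R ∈ (Icc 2 (m + 1)).powerset | Confined (flipColumns e R) r m k}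

theorem confinedFlips_mono (hr : r ≤ r') : confinedFlips e r m k ⊆ confinedFlips e r' m k := by
  classical
  exact monotone_filter_right _ fun _ _ h ↦ Confined.mono hr h

theorem sum_powerset_Icc_two_succ {M : Type*} [AddCommMonoid M] (f : Finset ℕ → M) (m : ℕ) :
    ∑ R ∈ (Icc 2 (m + 2)).powerset, f R =
      ∑ R ∈ (Icc 2 (m + 1)).powerset, (f R + f (insert (m + 2) R)) := by
  have hIcc : Icc 2 (m + 2) = insert (m + 2) (Icc 2 (m + 1)) :=
    (insert_Icc_right_eq_Icc_add_one (by lia)).symm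
  rw [hIcc, sum_powerset_insert (by simp), sum_add_distrib]

theorem card_confinedFlips_succ_le (e : ℕ → ℕ → Bool) (r m k : ℕ) :
    #(confinedFlips e r (m + 1) k) ≤ #(confinedFlips e r m k) + #(confinedFlips e (r - 1) m k) := by
  classical
  simp only [confinedFlips, card_filter, ← sum_add_distrib]
  rw [sum_powerset_Icc_two_succ]
  refine sum_le_sum fun R hR ↦ ?_
  have hlast : m + 2 ∉ R := fun h ↦ by simpa using mem_powerset.1 hR h
  have hlt : ∀ j < m, flipColumns e (insert (m + 2) R) j = flipColumns e R j :=
    fun j hj ↦ flipColumns_insert_of_lt hj e R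
  have hkeep := Confined.of_succ (r := r) (k := k) fun j (_ : j < m) ↦ (rfl : flipColumns e R j = _)
  have hflip := Confined.of_succ (r := r) (k := k) hlt
  have hboth := Confined.pred_of_not (r := r) (k := k) hlt (flipColumns_insert_last hlast e)
  split_ifs <;> simp_all

theorem sum_range_succ_choose_succ (m d : ℕ) :
    ∑ i ∈ range (d + 1), (m + 1).choose i =
      ∑ i ∈ range (d + 1), m.choose i + ∑ i ∈ range d, m.choose i := by
  rw [sum_range_succ', sum_range_succ' _ d]
  simp only [Nat.choose_succ_succ', sum_add_distrib, Nat.choose_zero_right]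
  ring

theorem card_confinedFlips_le_sum_choose {D d : ℕ}
    (base : ∀ d ≤ D, #(confinedFlips e (2 * k + d) (2 * (k + d)) k) ≤
      ∑ i ∈ range d, (2 * (k + d)).choose i)
    (hd : d ≤ D) (hm : 2 * (k + d) ≤ m) :
    #(confinedFlips e (2 * k + d) m k) ≤ ∑ i ∈ range d, m.choose i := by
  induction d generalizing m with
  | zero =>
    induction m, hm using Nat.le_induction with
    | base => exact base 0 hd
    | succ m hm ih =>
      rw [sum_range_zero] at ih ⊢
      have hpred : #(confinedFlips e (2 * k - 1) m k) ≤ #(confinedFlips e (2 * k) m k) :=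
        card_le_card (confinedFlips_mono (Nat.sub_le _ _))
      exact (card_confinedFlips_succ_le e (2 * k) m k).trans (add_le_add ih (hpred.trans ih))
  | succ d ihd =>
    induction m, hm using Nat.le_induction with
    | base => exact base (d + 1) hd
    | succ m hm ih =>
      rw [sum_range_succ_choose_succ]
      exact (card_confinedFlips_succ_le e (2 * k + (d + 1)) m k).trans
        (add_le_add ih (ihd (by lia) (by lia)))

end Confined

/-- The furthest rows in which the walk can be in the current column, according to the number of
columns that may have been flipped so far (the index) and to whether the current column is among
them (`flip`) or not (`keep`). -/
structure FlipProfile where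
  keep₀ : ℕ
  keep₁ : ℕ
  flip₁ : ℕ
  keep₂ : ℕ
  flip₂ : ℕ

namespace FlipProfile

variable {e e' : ℕ → ℕ → Bool} {f g : ℕ → Bool} {r m u s w : ℕ} {b : Bool} {t : FlipProfile}

/-- The profile in the first column. -/
def start : FlipProfile := ⟨1, 1, 1, 1, 1⟩

/-- The profile one column after `t`, when `f i` tells whether row `i` changes sign between the two
columns. -/
def step (f : ℕ → Bool) (t : FlipProfile) : FlipProfile where
  keep₀ := nextRow f t.keep₀
  keep₁ := max (nextRow f t.keep₁) (nextRow (fun i ↦ !f i) t.flip₁)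
  flip₁ := nextRow (fun i ↦ !f i) t.keep₀
  keep₂ := max (nextRow f t.keep₂) (nextRow (fun i ↦ !f i) t.flip₂)
  flip₂ := max (nextRow (fun i ↦ !f i) t.keep₁) (nextRow f t.flip₁)

/-- The profile in column `m + 1` of the sign change pattern `e`. -/
def ofPattern (e : ℕ → ℕ → Bool) : ℕ → FlipProfile
  | 0 => start
  | m + 1 => (ofPattern e m).step (e m)

/-- The rows occurring in a profile. -/
def rows (t : FlipProfile) : Finset ℕ := {t.keep₀, t.keep₁, t.flip₁, t.keep₂, t.flip₂}

/-- None of the walks recorded by the profile has left the first `r` rows. -/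
def Within (r : ℕ) (t : FlipProfile) : Prop := ∀ i ∈ t.rows, i ≤ r

instance (r : ℕ) (t : FlipProfile) : Decidable (t.Within r) :=
  inferInstanceAs (Decidable (∀ i ∈ t.rows, i ≤ r))

theorem within_iff : t.Within r ↔
    t.keep₀ ≤ r ∧ t.keep₁ ≤ r ∧ t.flip₁ ≤ r ∧ t.keep₂ ≤ r ∧ t.flip₂ ≤ r := by
  simp [Within, rows]

theorem step_congr (h : ∀ i ∈ t.rows, f i = g i) : t.step f = t.step g := by
  simp only [rows, mem_insert, mem_singleton, forall_eq_or_imp, forall_eq] at h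
  simp [step, nextRow, h]

theorem Within.of_step (h : (t.step f).Within r) : t.Within r := by
  rw [within_iff] at h ⊢
  simp only [step, max_le_iff] at h
  exact ⟨(le_nextRow _ _).trans h.1, (le_nextRow _ _).trans h.2.1.1,
    (le_nextRow _ _).trans h.2.1.2, (le_nextRow _ _).trans h.2.2.2.1.1,
    (le_nextRow _ _).trans h.2.2.2.1.2⟩

theorem ofPattern_congr (h : ∀ j < m, e j = e' j) : ofPattern e m = ofPattern e' m := by
  induction m with
  | zero => rfl
  | succ m ih => rw [ofPattern, ofPattern, ih fun j hj ↦ h j (by lia), h m (by lia)]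

/-- Flipping at most `u` of the first `m + 1` columns can take the walk to row `s` or beyond in
column `m + 1`; `b` tells whether that column is one of those flipped. -/
def Reaches (e : ℕ → ℕ → Bool) (m u : ℕ) (b : Bool) (s : ℕ) : Prop :=
  ∃ S ⊆ Icc 1 (m + 1), #S ≤ u ∧ decide (m + 1 ∈ S) = b ∧ s ≤ walkRow (flipColumns e S) m

theorem Reaches.max (hs : Reaches e m u b s) (hw : Reaches e m u b w) :
    Reaches e m u b (max s w) := by
  rcases max_choice s w with h | h <;> rwa [h]

theorem Reaches.keep (h : Reaches e m u b s) :
    Reaches e (m + 1) u false (nextRow (fun i ↦ e m i ^^ b) s) := by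
  obtain ⟨S, hS, hu, rfl, hs⟩ := h
  have hlast : m + 2 ∉ S := fun h ↦ by simpa using hS h
  refine ⟨S, hS.trans (Icc_subset_Icc_right (by lia)), hu, by simp [hlast], ?_⟩
  have hrow : flipColumns e S m = fun i ↦ e m i ^^ decide (m + 1 ∈ S) := by
    funext i
    simp [flipColumns, hlast]
  rw [walkRow, hrow]
  exact nextRow_monotone _ hs

theorem Reaches.flip (h : Reaches e m u b s) :
    Reaches e (m + 1) (u + 1) true (nextRow (fun i ↦ !(e m i ^^ b)) s) := by
  obtain ⟨S, hS, hu, rfl, hs⟩ := h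
  have hlast : m + 2 ∉ S := fun h ↦ by simpa using hS h
  refine ⟨insert (m + 2) S, insert_subset (by simp) (hS.trans (Icc_subset_Icc_right (by lia))),
    (card_insert_le _ _).trans (by lia), by simp, ?_⟩
  have hrow : flipColumns e (insert (m + 2) S) m = fun i ↦ !(e m i ^^ decide (m + 1 ∈ S)) := by
    funext i
    simp [flipColumns, hlast]
  rw [walkRow, hrow, walkRow_congr fun j hj ↦ flipColumns_insert_of_lt hj e S]
  exact nextRow_monotone _ hs

theorem reaches_ofPattern (e : ℕ → ℕ → Bool) (m : ℕ) :
    Reaches e m 0 false (ofPattern e m).keep₀ ∧ Reaches e m 1 false (ofPattern e m).keep₁ ∧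
    Reaches e m 1 true (ofPattern e m).flip₁ ∧ Reaches e m 2 false (ofPattern e m).keep₂ ∧
    Reaches e m 2 true (ofPattern e m).flip₂ := by
  induction m with
  | zero =>
    have hkeep (u : ℕ) : Reaches e 0 u false 1 := ⟨∅, by simp, by simp, by simp, le_rfl⟩
    have hflip (u : ℕ) : Reaches e 0 (u + 1) true 1 := ⟨{1}, by simp, by simp, by simp, le_rfl⟩
    exact ⟨hkeep 0, hkeep 1, hflip 0, hkeep 2, hflip 1⟩
  | succ m ih =>
    obtain ⟨hk₀, hk₁, hf₁, hk₂, hf₂⟩ := ih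
    simp only [ofPattern, step]
    refine ⟨?_, .max ?_ ?_, ?_, .max ?_ ?_, .max ?_ ?_⟩
    · simpa using hk₀.keep
    · simpa using hk₁.keep
    · simpa using hf₁.keep
    · simpa using hk₀.flip
    · simpa using hk₂.keep
    · simpa using hf₂.keep
    · simpa using hk₁.flip
    · simpa using hf₁.flip

theorem Reaches.le_of_confined (h : Reaches e m u b s) (he : Confined e r m u) : s ≤ r := by
  obtain ⟨S, hS, hu, -, hs⟩ := h
  exact hs.trans (he S hS hu)

theorem within_ofPattern (he : Confined e r m 2) : (ofPattern e m).Within r := by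
  obtain ⟨hk₀, hk₁, hf₁, hk₂, hf₂⟩ := reaches_ofPattern e m
  have h₁ : Confined e r m 1 := he.anti one_le_two
  exact within_iff.2 ⟨hk₀.le_of_confined (he.anti zero_le_two), hk₁.le_of_confined h₁,
    hf₁.le_of_confined h₁, hk₂.le_of_confined he, hf₂.le_of_confined he⟩

/-- The value `f n`, with `n` brought into constructor form before `f` is unfolded. -/
def force {α : Type*} (n : ℕ) (f : ℕ → α) : α :=
  match n with
  | 0 => f 0
  | n + 1 => f (n + 1)

/-- The value `f t`, with all rows of `t` forced first. Equal profiles thus become identical terms,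
and the kernel's cache keeps it from evaluating `bound` more than once for the same profile. -/
def eval {α : Type*} (f : FlipProfile → α) (t : FlipProfile) : α :=
  force t.keep₀ fun k₀ ↦ force t.keep₁ fun k₁ ↦ force t.flip₁ fun f₁ ↦
    force t.keep₂ fun k₂ ↦ force t.flip₂ fun f₂ ↦ f ⟨k₀, k₁, f₁, k₂, f₂⟩

theorem force_eq {α : Type*} (n : ℕ) (f : ℕ → α) : force n f = f n := by
  cases n <;> rfl

theorem eval_eq {α : Type*} (f : FlipProfile → α) (t : FlipProfile) : eval f t = f t := by
  simp only [eval, force_eq]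

/-- An upper bound for the number of ways to extend a profile by `m` columns without leaving the
first `r` rows. In each step an adversary chooses the rows `E` that change sign; negating the new
column replaces `E` by its complement. -/
def bound (r : ℕ) : ℕ → FlipProfile → ℕ
  | 0, t => if t.Within r then 1 else 0
  | m + 1, t =>
    if t.Within r then
      t.rows.powerset.sup fun E ↦
        eval (bound r m) (t.step (· ∈ E)) + eval (bound r m) (t.step (· ∉ E))
    else 0

theorem bound_eq_zero (h : ¬t.Within r) (m : ℕ) : bound r m t = 0 := by
  cases m <;> simp only [bound, h, if_false]

theorem bound_step_add_le (r m : ℕ) (f : ℕ → Bool) (t : FlipProfile) :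
    bound r m (t.step f) + bound r m (t.step fun i ↦ !f i) ≤ bound r (m + 1) t := by
  by_cases ht : t.Within r
  · have hE : t.rows.filter (f ·) ∈ t.rows.powerset := mem_powerset.2 (filter_subset _ _)
    have hf : t.step f = t.step (· ∈ t.rows.filter (f ·)) :=
      step_congr fun i hi ↦ by simp [hi]
    have hnf : (t.step fun i ↦ !f i) = t.step (· ∉ t.rows.filter (f ·)) :=
      step_congr fun i hi ↦ by simp [hi]
    rw [bound, if_pos ht, hf, hnf]
    simp only [eval_eq]
    exact le_sup_of_le hE le_rfl
  · rw [bound_eq_zero fun h ↦ ht h.of_step, bound_eq_zero fun h ↦ ht h.of_step]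
    exact Nat.zero_le _

theorem sum_bound_ofPattern_le (e : ℕ → ℕ → Bool) (r i j : ℕ) :
    ∑ R ∈ (Icc 2 (j + 1)).powerset, bound r i (ofPattern (flipColumns e R) j) ≤
      bound r (i + j) start := by
  induction j generalizing i with
  | zero => simp [ofPattern]
  | succ j ih =>
    rw [sum_powerset_Icc_two_succ]
    refine (sum_le_sum fun R hR ↦ ?_).trans ((ih (i + 1)).trans_eq (by rw [add_right_comm]; rfl))
    have hlast : j + 2 ∉ R := fun h ↦ by simpa using mem_powerset.1 hR h
    have hflip : flipColumns e (insert (j + 2) R) j = fun i ↦ !flipColumns e R j i :=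
      funext (flipColumns_insert_last hlast e)
    rw [ofPattern, ofPattern, ofPattern_congr fun _ hj ↦ flipColumns_insert_of_lt hj e R, hflip]
    exact bound_step_add_le _ _ _ _

theorem card_confinedFlips_le_bound (e : ℕ → ℕ → Bool) (r m : ℕ) :
    #(confinedFlips e r m 2) ≤ bound r m start := by
  classical
  rw [confinedFlips, card_filter]
  refine (sum_le_sum fun R _ ↦ ?_).trans <|
    (sum_bound_ofPattern_le e r 0 m).trans_eq (by rw [zero_add])
  split_ifs with hR
  · rw [bound, if_pos (within_ofPattern hR)]
  · exact Nat.zero_le _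

theorem bound_start_le : ∀ d ≤ 3,
    bound (2 * 2 + d) (2 * (2 + d)) start ≤ ∑ i ∈ range d, (2 * (2 + d)).choose i := by
  decide +kernel

end FlipProfile

theorem IsNeighborlyTravel.mem_image_downMoves {A : ℕ → ℕ → ℤ} {r m k : ℕ} {D : Finset ℕ}
    (hA : IsSignMatrix r (m + 1) A) (hD : IsNeighborlyTravel A r (m + 1) k D) :
    D ∈ (confinedFlips (signChange A) r m k).image fun R ↦ downMoves (reorient A R) (m + 1) := by
  classical
  obtain ⟨R, hR, hfollows, hneighborly⟩ := hD.exists_subset_Icc_two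
  exact mem_image.2 ⟨R, mem_filter.2 ⟨mem_powerset.2 hR, hneighborly.confined hA⟩,
    hfollows.eq_downMoves.symm⟩

theorem statement_18_general {d n : ℕ} (hd : d ≤ 3) (hn : 2 * (2 + d) < n) {A : ℕ → ℕ → ℤ}
    (hA : IsSignMatrix (4 + d) n A) :
    {D | IsPlainTravel (4 + d) n D ∧ IsNeighborlyTravel A (4 + d) n 2 D}.ncard ≤
      ∑ i ∈ range d, (n - 1).choose i := by
  obtain ⟨m, rfl⟩ := Nat.exists_eq_add_of_le' (show 1 ≤ n by lia)
  have hbase (d : ℕ) (hd : d ≤ 3) :=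
    (FlipProfile.card_confinedFlips_le_bound (signChange A) (2 * 2 + d) (2 * (2 + d))).trans
      (FlipProfile.bound_start_le d hd)
  let flips := confinedFlips (signChange A) (4 + d) m 2
  let travels := flips.image fun R ↦ downMoves (reorient A R) (m + 1)
  calc _ ≤ (travels : Set (Finset ℕ)).ncard :=
        Set.ncard_le_ncard (fun D hD ↦ mem_coe.2 (hD.2.mem_image_downMoves hA)) (finite_toSet _)
    _ = #travels := Set.ncard_coe_finset _
    _ ≤ #flips := card_image_le
    _ ≤ ∑ i ∈ range d, m.choose i := card_confinedFlips_le_sum_choose hbase hd (by lia)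

/-- For every `n ≥ 11`, every `7 × n` sign matrix has at most
`1 + (n-1) + C(n-1,2)` 2-neighborly plain travels. -/
theorem statement_18 (n : ℕ) (hn : 11 ≤ n) (A : ℕ → ℕ → ℤ) (hA : IsSignMatrix 7 n A) :
    {D : Finset ℕ | IsPlainTravel 7 n D ∧ IsNeighborlyTravel A 7 n 2 D}.ncard ≤
      1 + (n - 1) + (n - 1).choose 2 := by
  simpa [sum_range_succ] using statement_18_general (d := 3) le_rfl hn hA
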